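/- arXiv:1908.08395 — 2 statements merged into one kernel-verified Lean document; each statement's English description precedes it below -/
import Mathlib

section
/- For the R-matrix R of a vector space V satisfying the Yang–Baxter equation R_{12}R_{13}R_{23} = R_{23}R_{13}R_{12}, an element R̃ ∈ Aut(V⊗V) satisfying R̃_{21}R̃_{31}R_{23} = R_{23}R̃_{31}R̃_{21} and R_{12}R̃_{31}R̃_{32} = R̃_{32}R̃_{31}R_{12}, and scalar f with R_{12}R_{21} = f·Id, the shuffle product A_{1...k} * B_{1...l} = Σ over partitions {1,...,k+l} = {a₁<...<a_k} ⊔ {b₁<...<b_l} of [product of R_{a_i b_j} over pairs with a_i < b_j] · A_{a₁...a_k} · [product of R̃_{a_i b_j}] · B_{b₁...b_l} · [product of R_{a_i b_j} over pairs with a_i > b_j] defines an associative multiplication on ⊕_{k≥0} End(V^{⊗k}) with unit 1 ∈ End(V^{⊗0}). -/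
/-!
STATEMENT 6: Given an R-matrix R satisfying the Yang–Baxter equation, an
element R̃ satisfying the mixed Yang–Baxter relations, and a scalar f with
R₁₂R₂₁ = f·Id, the shuffle product defines an associative multiplication on
`⊕_{k≥0} End(V^{⊗k})` with unit `1 ∈ End(V^{⊗0})`.  Here `V = Kⁿ` and
`End(V^{⊗k})` is modeled as matrices indexed by `Fin k → Fin n`.
-/

/-- Index set for `V^{⊗k}`, `V = Kⁿ`. -/
abbrev Idx (n k : ℕ) := Fin k → Fin n

/-- `X_{a₁...a_k}`: the operator `X ∈ End(V^{⊗k})` acting on the tensor factors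
`ι 0, ..., ι (k-1)` of `V^{⊗N}`, and as the identity on the other factors. -/
def embed {K : Type*} [Field K] {n k N : ℕ} (ι : Fin k → Fin N)
    (X : Matrix (Idx n k) (Idx n k) K) : Matrix (Idx n N) (Idx n N) K :=
  fun f g => X (f ∘ ι) (g ∘ ι) *
    ∏ b : Fin N, if b ∈ Finset.image ι Finset.univ then 1
      else (if f b = g b then 1 else 0)

section Shuffle

variable {K : Type*} [Field K] {n : ℕ}
variable (R Rt : Matrix (Idx n 2) (Idx n 2) K)

/-- `∏ R_{a_i b_j}` over pairs with `a_i < b_j`, ordered as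
`R_{a_k b_1} ⋯ R_{a_1 b_l}` (for each `j` ascending, `i` descending). -/
def prodRlt {k l N : ℕ} (a : Fin k → Fin N) (b : Fin l → Fin N) :
    Matrix (Idx n N) (Idx n N) K :=
  (((List.finRange l).map fun j =>
    (((List.finRange k).reverse.map fun i =>
      if a i < b j then embed ![a i, b j] R else 1)).prod)).prod

/-- `∏ R_{a_i b_j}` over pairs with `a_i > b_j`, in the same order. -/
def prodRgt {k l N : ℕ} (a : Fin k → Fin N) (b : Fin l → Fin N) :
    Matrix (Idx n N) (Idx n N) K :=
  (((List.finRange l).map fun j =>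
    (((List.finRange k).reverse.map fun i =>
      if b j < a i then embed ![a i, b j] R else 1)).prod)).prod

/-- `R̃_{a_1 b_l} ⋯ R̃_{a_k b_1}` (for each `i` ascending, `j` descending). -/
def prodRt {k l N : ℕ} (a : Fin k → Fin N) (b : Fin l → Fin N) :
    Matrix (Idx n N) (Idx n N) K :=
  (((List.finRange k).map fun i =>
    (((List.finRange l).reverse.map fun j =>
      embed ![a i, b j] Rt)).prod)).prod

/-- The shuffle product of `A ∈ End(V^{⊗k})` and `B ∈ End(V^{⊗l})`:
the sum over partitions `{1,…,k+l} = {a₁<…<a_k} ⊔ {b₁<…<b_l}` of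
`[∏_{a_i<b_j} R_{a_ib_j}] A_{a₁…a_k} [R̃_{a_1b_l}…R̃_{a_kb_1}] B_{b₁…b_l}
 [∏_{a_i>b_j} R_{a_ib_j}]`. -/
def shufMul (k l : ℕ) (A : Matrix (Idx n k) (Idx n k) K)
    (B : Matrix (Idx n l) (Idx n l) K) :
    Matrix (Idx n (k + l)) (Idx n (k + l)) K :=
  ∑ s : {s : Finset (Fin (k + l)) // s.card = k},
    let a : Fin k → Fin (k + l) := s.1.orderEmbOfFin s.2
    let b : Fin l → Fin (k + l) := (s.1ᶜ).orderEmbOfFin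
      (by rw [Finset.card_compl, s.2, Fintype.card_fin]; omega)
    prodRlt R a b * embed a A * prodRt Rt a b * embed b B * prodRgt R a b

/-- Transport along an equality of the number of tensor factors. -/
def recast {m m' : ℕ} (h : m = m') (M : Matrix (Idx n m) (Idx n m) K) :
    Matrix (Idx n m') (Idx n m') K := h ▸ M

/-- The underlying space `⊕_{k≥0} End(V^{⊗k})` (as a graded product; the
shuffle product only involves finitely many terms in each degree). -/
def GA (n : ℕ) (K : Type*) [Field K] :=
  (k : ℕ) → Matrix (Idx n k) (Idx n k) K

/-- The shuffle product on `⊕_k End(V^{⊗k})`. -/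
def gaMul (x y : GA n K) : GA n K := fun N =>
  ∑ k ∈ (Finset.range (N + 1)).attach,
    recast (by have := Finset.mem_range.mp k.2; omega)
      (shufMul R Rt k.1 (N - k.1) (x k.1) (y (N - k.1)))

/-- The unit `1 ∈ End(V^{⊗0})`. -/
def gaOne : GA n K := fun N =>
  if h : N = 0 then recast h.symm 1 else 0

end Shuffle

/-!
For disjoint sets of sites `A`, `B` write `X(A,B)` and `Y(A,B)` for the ordered products of the
`R_{ab}` with `a < b` and with `a > b`, and `T(A,B)` for the ordered product of all `R̃_{ab}`, so
that the shuffle product sums the terms `X(A,B) x T(A,B) y Y(A,B)`, where `x` acts on `A` and `y`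
on `B`. Associativity then holds term by term for each ordered partition `A ⊔ B ⊔ C` of the sites:
moving commuting factors past each other, it amounts to

* `X(A∪B,C) X(A,B) = X(A,B∪C) X(B,C)` and `T(A,B∪C) X(B,C) = X(B,C) T(A,B) T(A,C)`;
* `Y(A,B) Y(A∪B,C) = Y(B,C) Y(A,B∪C)` and `Y(A,B) T(A∪B,C) = T(A,C) T(B,C) Y(A,B)`.

The first two follow by peeling off the largest site, which reduces them to the exchange of one
`R_{ab}` with two adjacent factors, that is, to a Yang–Baxter relation. Reversing all products and
exchanging the two indices of `R` and `R̃` interchanges `X` with `Y` and the two mixed relations,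
and so turns the first two identities into the last two.
-/

section OrderedProducts

variable {ι M : Type*} [Monoid M]

theorem semiconjBy_list_prod_map {z : M} {f g : ι → M} (l : List ι)
    (h : ∀ x ∈ l, SemiconjBy z (f x) (g x)) :
    SemiconjBy z (l.map f).prod (l.map g).prod := by
  induction l with
  | nil => exact SemiconjBy.one_right z
  | cons a l ih =>
    simp only [List.map_cons, List.prod_cons]
    exact (h a List.mem_cons_self).mul_right (ih fun x hx => h x (List.mem_cons_of_mem a hx))

theorem list_prod_map_mul_of_commute {f g : ι → M} {l : List ι} (hl : l.Nodup)
    (h : ∀ x ∈ l, ∀ y ∈ l, x ≠ y → Commute (g x) (f y)) :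
    (l.map fun x => f x * g x).prod = (l.map f).prod * (l.map g).prod := by
  induction l with
  | nil => simp
  | cons a l ih =>
    obtain ⟨ha, hl⟩ := List.nodup_cons.mp hl
    have hcomm : Commute (g a) (l.map f).prod := semiconjBy_list_prod_map l fun y hy =>
      h a List.mem_cons_self y (List.mem_cons_of_mem a hy) (ne_of_mem_of_not_mem hy ha).symm
    have ih := ih hl fun x hx y hy =>
      h x (List.mem_cons_of_mem a hx) y (List.mem_cons_of_mem a hy)
    simp only [List.map_cons, List.prod_cons, ih, mul_assoc, hcomm.left_comm]

variable [LinearOrder ι]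

/-- The product of `f` over `P` in increasing order of the index. -/
def ascProd (P : Finset ι) (f : ι → M) : M := (P.sort.map f).prod

/-- The product of `f` over `P` in decreasing order of the index. -/
def descProd (P : Finset ι) (f : ι → M) : M := (P.sort.reverse.map f).prod

variable {P Q : Finset ι} {p : ι} {f g : ι → M} {z : M}

@[simp]
theorem ascProd_empty (f : ι → M) : ascProd ∅ f = 1 := by simp [ascProd]

@[simp]
theorem descProd_empty (f : ι → M) : descProd ∅ f = 1 := by simp [descProd]

@[simp]
theorem ascProd_one (P : Finset ι) : ascProd P (fun _ => (1 : M)) = 1 := by simp [ascProd]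

theorem ascProd_congr (h : ∀ x ∈ P, f x = g x) : ascProd P f = ascProd P g :=
  congrArg List.prod (List.map_congr_left fun x hx => h x (by simpa using hx))

theorem descProd_congr (h : ∀ x ∈ P, f x = g x) : descProd P f = descProd P g :=
  congrArg List.prod (List.map_congr_left fun x hx => h x (by simpa using hx))

theorem op_ascProd (P : Finset ι) (f : ι → M) :
    MulOpposite.op (ascProd P f) = descProd P fun x => MulOpposite.op (f x) := by
  simp [ascProd, descProd, MulOpposite.op_list_prod, Function.comp_def]

theorem op_descProd (P : Finset ι) (f : ι → M) :
    MulOpposite.op (descProd P f) = ascProd P fun x => MulOpposite.op (f x) := by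
  simp [ascProd, descProd, MulOpposite.op_list_prod, Function.comp_def]

theorem map_ascProd {M' : Type*} [Monoid M'] (φ : M →* M') (P : Finset ι) (f : ι → M) :
    φ (ascProd P f) = ascProd P fun x => φ (f x) := by
  simp [ascProd, map_list_prod, Function.comp_def]

theorem map_descProd {M' : Type*} [Monoid M'] (φ : M →* M') (P : Finset ι) (f : ι → M) :
    φ (descProd P f) = descProd P fun x => φ (f x) := by
  simp [descProd, map_list_prod, Function.comp_def]

theorem ascProd_map {κ : Type*} [LinearOrder κ] (e : κ ↪o ι) (P : Finset κ) (f : ι → M) :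
    ascProd (P.map e.toEmbedding) f = ascProd P (f ∘ e) := by
  have hsort : P.sort.map e = (P.map e.toEmbedding).sort :=
    (e.strictMono.strictMonoOn _).map_finsetSort e.toEmbedding P
  rw [ascProd, ← hsort, List.map_map, ascProd]

theorem descProd_map {κ : Type*} [LinearOrder κ] (e : κ ↪o ι) (P : Finset κ) (f : ι → M) :
    descProd (P.map e.toEmbedding) f = descProd P (f ∘ e) := by
  rw [← MulOpposite.op_inj, op_descProd, ascProd_map, op_descProd]
  rfl

theorem sort_insert_max (h : ∀ x ∈ P, x < p) : (insert p P).sort = P.sort ++ [p] := by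
  have hp : p ∉ P := fun hp => (h p hp).false
  have hinsert : insert p P = (P.sort ++ [p]).toFinset := by ext x; simp
  rw [hinsert, List.toFinset_sort]
  · simpa [List.pairwise_append] using fun x hx => (h x hx).le
  · simpa [List.nodup_append] using hp

theorem ascProd_insert_max (h : ∀ x ∈ P, x < p) (f : ι → M) :
    ascProd (insert p P) f = ascProd P f * f p := by
  simp [ascProd, sort_insert_max h]

theorem descProd_insert_max (h : ∀ x ∈ P, x < p) (f : ι → M) :
    descProd (insert p P) f = f p * descProd P f := by
  simp [descProd, sort_insert_max h]

theorem descProd_insert_of_eq_one (hp : f p = 1) : descProd (insert p P) f = descProd P f := by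
  induction P using Finset.induction_on_max with
  | empty => rw [descProd_insert_max (by simp), hp, one_mul]
  | insert m P hm ih =>
    rcases lt_trichotomy p m with hpm | rfl | hmp
    · rw [Finset.insert_comm, descProd_insert_max (by simpa using ⟨hpm, hm⟩), ih,
        descProd_insert_max hm]
    · rw [Finset.insert_idem]
    · rw [descProd_insert_max (by simpa using ⟨hmp, fun x hx => (hm x hx).trans hmp⟩), hp,
        one_mul]

theorem semiconjBy_ascProd (h : ∀ x ∈ P, SemiconjBy z (f x) (g x)) :
    SemiconjBy z (ascProd P f) (ascProd P g) :=
  semiconjBy_list_prod_map _ fun x hx => h x (by simpa using hx)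

theorem semiconjBy_descProd (h : ∀ x ∈ P, SemiconjBy z (f x) (g x)) :
    SemiconjBy z (descProd P f) (descProd P g) :=
  semiconjBy_list_prod_map _ fun x hx => h x (by simpa using hx)

theorem commute_ascProd (h : ∀ x ∈ P, Commute z (f x)) : Commute z (ascProd P f) :=
  semiconjBy_ascProd h

theorem commute_descProd (h : ∀ x ∈ P, Commute z (f x)) : Commute z (descProd P f) :=
  semiconjBy_descProd h

theorem commute_descProd_descProd (h : ∀ x ∈ P, ∀ y ∈ Q, Commute (f x) (g y)) :
    Commute (descProd P f) (descProd Q g) :=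
  commute_descProd fun y hy => (commute_descProd fun x hx => (h x hx y hy).symm).symm

theorem ascProd_mul (h : ∀ x ∈ P, ∀ y ∈ P, x ≠ y → Commute (g x) (f y)) :
    (ascProd P fun x => f x * g x) = ascProd P f * ascProd P g :=
  list_prod_map_mul_of_commute (P.sort_nodup _) fun x hx y hy =>
    h x (by simpa using hx) y (by simpa using hy)

theorem descProd_mul (h : ∀ x ∈ P, ∀ y ∈ P, x ≠ y → Commute (g x) (f y)) :
    (descProd P fun x => f x * g x) = descProd P f * descProd P g :=
  list_prod_map_mul_of_commute (List.nodup_reverse.mpr (P.sort_nodup _)) fun x hx y hy =>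
    h x (by simpa using hx) y (by simpa using hy)

theorem mul_descProd_mul_descProd {s u : ι → M}
    (h : ∀ x ∈ P, z * s x * u x = u x * s x * z)
    (hcomm : ∀ x ∈ P, ∀ y ∈ P, x ≠ y → Commute (s x) (u y)) :
    z * descProd P s * descProd P u = descProd P u * descProd P s * z := by
  have hsu : SemiconjBy z (descProd P fun x => s x * u x) (descProd P fun x => u x * s x) :=
    semiconjBy_descProd fun x hx => by simpa only [SemiconjBy, mul_assoc] using h x hx
  rw [descProd_mul fun x hx y hy hxy => (hcomm y hy x hx hxy.symm).symm,
    descProd_mul hcomm] at hsu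
  simpa only [SemiconjBy, mul_assoc] using hsu

@[elab_as_elim]
theorem disjoint_induction_on_max {motive : Finset ι → Finset ι → Prop} {P Q : Finset ι}
    (hPQ : Disjoint P Q) (empty : motive ∅ ∅)
    (insert_left : ∀ P Q p, Disjoint P Q → (∀ x ∈ P, x < p) → (∀ x ∈ Q, x < p) → motive P Q →
      motive (insert p P) Q)
    (insert_right : ∀ P Q p, Disjoint P Q → (∀ x ∈ P, x < p) → (∀ x ∈ Q, x < p) → motive P Q →
      motive P (insert p Q)) :
    motive P Q := by
  induction hS : P ∪ Q using Finset.induction_on_max generalizing P Q with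
  | empty =>
    obtain ⟨rfl, rfl⟩ := Finset.union_eq_empty.mp hS
    exact empty
  | insert p S hp ih =>
    have hS' : P.erase p ∪ Q.erase p = S := by
      rw [← Finset.erase_union_distrib, hS, Finset.erase_insert fun h => (hp p h).false]
    have hP : ∀ x ∈ P.erase p, x < p := fun x hx => hp x (hS' ▸ Finset.mem_union_left _ hx)
    have hQ : ∀ x ∈ Q.erase p, x < p := fun x hx => hp x (hS' ▸ Finset.mem_union_right _ hx)
    have hdisj : Disjoint (P.erase p) (Q.erase p) :=
      hPQ.mono (P.erase_subset p) (Q.erase_subset p)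
    rcases Finset.mem_union.mp (hS ▸ Finset.mem_insert_self p S) with hpP | hpQ
    · simpa [hpP, Finset.disjoint_left.mp hPQ hpP] using
        insert_left _ _ p hdisj hP hQ (ih hdisj hS')
    · simpa [hpQ, Finset.disjoint_right.mp hPQ hpQ] using
        insert_right _ _ p hdisj hP hQ (ih hdisj hS')

end OrderedProducts

section CrossProducts

variable {ι κ M : Type*} [LinearOrder ι] [LinearOrder κ] [Monoid M]

/-- The product of `r p q` over `P × Q` in the order of the paper's products of `R`'s:
`q` increasing outside, `p` decreasing inside. -/
def crossProd (r : ι → κ → M) (P : Finset ι) (Q : Finset κ) : M :=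
  ascProd Q fun q => descProd P fun p => r p q

/-- The product of `r p q` over `P × Q` in the order of the paper's product of `R̃`'s:
`p` increasing outside, `q` decreasing inside. -/
def revCrossProd (r : ι → κ → M) (P : Finset ι) (Q : Finset κ) : M :=
  crossProd (flip r) Q P

variable {r : ι → κ → M} {P : Finset ι} {Q : Finset κ} {p : ι} {q : κ} {z : M}

@[simp]
theorem crossProd_empty_left (r : ι → κ → M) (Q : Finset κ) : crossProd r ∅ Q = 1 := by
  simp [crossProd]

@[simp]
theorem crossProd_empty_right (r : ι → κ → M) (P : Finset ι) : crossProd r P ∅ = 1 := by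
  simp [crossProd]

theorem crossProd_insert_max_right (hq : ∀ x ∈ Q, x < q) :
    crossProd r P (insert q Q) = crossProd r P Q * descProd P fun p => r p q :=
  ascProd_insert_max hq _

theorem crossProd_insert_left_of_eq_one (hp : ∀ q ∈ Q, r p q = 1) :
    crossProd r (insert p P) Q = crossProd r P Q :=
  ascProd_congr fun q hq => descProd_insert_of_eq_one (hp q hq)

theorem commute_crossProd (h : ∀ p ∈ P, ∀ q ∈ Q, Commute z (r p q)) :
    Commute z (crossProd r P Q) :=
  commute_ascProd fun q hq => commute_descProd fun p hp => h p hp q hq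

theorem op_crossProd
    (h : ∀ p ∈ P, ∀ p' ∈ P, ∀ q ∈ Q, ∀ q' ∈ Q, p ≠ p' → q ≠ q' → Commute (r p q) (r p' q')) :
    MulOpposite.op (crossProd r P Q) = crossProd (fun q p => MulOpposite.op (r p q)) Q P := by
  induction P using Finset.induction_on_max with
  | empty => simp
  | insert m P hm ih =>
    have hinsert : crossProd r (insert m P) Q = (ascProd Q fun q => r m q) * crossProd r P Q := by
      simp only [crossProd, descProd_insert_max hm]
      refine ascProd_mul fun q hq q' hq' hqq' => (commute_descProd fun p hp => ?_).symm
      exact h m (P.mem_insert_self m) p (Finset.mem_insert_of_mem hp) q' hq' q hq (hm p hp).ne'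
        hqq'.symm
    have ih := ih fun p hp p' hp' =>
      h p (Finset.mem_insert_of_mem hp) p' (Finset.mem_insert_of_mem hp')
    rw [hinsert, MulOpposite.op_mul, ih, op_ascProd, crossProd_insert_max_right hm]

theorem crossProd_map {ι' κ' : Type*} [LinearOrder ι'] [LinearOrder κ'] (r : ι → κ → M)
    (e : ι' ↪o ι) (e' : κ' ↪o κ) (P : Finset ι') (Q : Finset κ') :
    crossProd r (P.map e.toEmbedding) (Q.map e'.toEmbedding) =
      crossProd (fun p q => r (e p) (e' q)) P Q := by
  simp only [crossProd, ascProd_map, descProd_map, Function.comp_def]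

theorem map_crossProd {M' : Type*} [Monoid M'] (φ : M →* M') (r : ι → κ → M) (P : Finset ι)
    (Q : Finset κ) : φ (crossProd r P Q) = crossProd (fun p q => φ (r p q)) P Q := by
  simp only [crossProd, map_ascProd, map_descProd]

/-- The family `r` with the factors outside `p < q` replaced by `1`. -/
def restrictLT (r : ι → ι → M) (p q : ι) : M := if p < q then r p q else 1

/-- The family `r` with the factors outside `q < p` replaced by `1`. -/
def restrictGT (r : ι → ι → M) (p q : ι) : M := if q < p then r p q else 1

theorem commute_restrictLT {r : ι → ι → M} {p q : ι} (h : Commute z (r p q)) :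
    Commute z (restrictLT r p q) := by
  unfold restrictLT
  split_ifs
  exacts [h, Commute.one_right z]

theorem commute_restrictGT {r : ι → ι → M} {p q : ι} (h : Commute z (r p q)) :
    Commute z (restrictGT r p q) := by
  unfold restrictGT
  split_ifs
  exacts [h, Commute.one_right z]

theorem op_restrictGT (r : ι → ι → M) (p q : ι) :
    MulOpposite.op (restrictGT r p q) = restrictLT (fun a b => MulOpposite.op (r b a)) q p :=
  apply_ite MulOpposite.op _ _ _

theorem descProd_union_mul_crossProd_restrictLT {r : ι → ι → M} {s : ι → M} {A B : Finset ι}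
    (hAB : Disjoint A B)
    (hcomm : ∀ z ∈ A ∪ B, ∀ x ∈ A, ∀ y ∈ B, z ≠ x → z ≠ y → Commute (s z) (r x y))
    (h : ∀ x ∈ A, ∀ y ∈ B, x < y → s y * s x * r x y = r x y * s x * s y) :
    descProd (A ∪ B) s * crossProd (restrictLT r) A B =
      crossProd (restrictLT r) A B * descProd A s * descProd B s := by
  revert hcomm h
  refine disjoint_induction_on_max hAB (fun _ _ => by simp) ?_ ?_
  · intro A B p _ hA hB ih hcomm h
    have hp : Commute (s p) (crossProd (restrictLT r) A B) :=
      commute_crossProd fun x hx y hy => commute_restrictLT <|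
        hcomm p (by simp) x (by simp [hx]) y hy (hA x hx).ne' (hB y hy).ne'
    have hX : crossProd (restrictLT r) (insert p A) B = crossProd (restrictLT r) A B :=
      crossProd_insert_left_of_eq_one fun q hq => if_neg (hB q hq).not_gt
    rw [Finset.insert_union, hX, descProd_insert_max hA, descProd_insert_max (by grind), mul_assoc,
      ih (by grind) (by grind)]
    simp only [mul_assoc, hp.left_comm]
  · intro A B p hAB hA hB ih hcomm h
    have hp : Commute (s p) (crossProd (restrictLT r) A B) :=
      commute_crossProd fun x hx y hy => commute_restrictLT <|
        hcomm p (by simp) x hx y (by simp [hy]) (hA x hx).ne' (hB y hy).ne'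
    have hX : crossProd (restrictLT r) A (insert p B) =
        crossProd (restrictLT r) A B * descProd A fun x => r x p := by
      rw [crossProd_insert_max_right hB]
      exact congrArg _ (descProd_congr fun x hx => if_pos (hA x hx))
    have hBA : Commute (descProd B s) (descProd A fun x => r x p) :=
      commute_descProd_descProd fun y hy x hx => hcomm y (by simp [hy]) x hx p (by simp)
        (Finset.disjoint_left.mp hAB hx <| · ▸ hy) (hB y hy).ne
    have hrow : s p * descProd A s * (descProd A fun x => r x p) =
        (descProd A fun x => r x p) * descProd A s * s p :=
      mul_descProd_mul_descProd (fun x hx => h x hx p (by simp) (hA x hx))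
        fun x hx y hy hxy => hcomm x (by simp [hx]) y hy p (by simp) hxy (hA x hx).ne
    rw [Finset.union_insert, hX, descProd_insert_max hB, descProd_insert_max (by grind)]
    calc s p * descProd (A ∪ B) s * (crossProd (restrictLT r) A B * descProd A fun x => r x p)
        = s p * (descProd (A ∪ B) s * crossProd (restrictLT r) A B) *
            descProd A fun x => r x p := by simp only [mul_assoc]
      _ = crossProd (restrictLT r) A B * (s p * descProd A s * descProd A fun x => r x p) *
            descProd B s := by
          rw [ih (by grind) (by grind)]
          simp only [mul_assoc, hBA.eq, hp.left_comm]
      _ = _ := by rw [hrow]; simp only [mul_assoc]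

end CrossProducts

section ShufflePairs

variable {ι M : Type*}

/-- A family of operators attached to ordered pairs of sites, such as `R_{ab}`, in which operators
on disjoint pairs commute and the Yang–Baxter equation holds. -/
structure IsYangBaxter [Monoid M] (r : ι → ι → M) : Prop where
  commute : ∀ a b c d, a ≠ c → a ≠ d → b ≠ c → b ≠ d → Commute (r a b) (r c d)
  yangBaxter : ∀ a b c, a ≠ b → a ≠ c → b ≠ c →
    r a b * r a c * r b c = r b c * r a c * r a b

/-- The families `r a b = R_{ab}` and `t a b = R̃_{ab}`, together with the mixed Yang–Baxter
relations between them. -/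
structure IsShufflePair [Monoid M] (r t : ι → ι → M) : Prop extends IsYangBaxter r where
  commute_right : ∀ a b c d, a ≠ c → a ≠ d → b ≠ c → b ≠ d → Commute (t a b) (t c d)
  commute_right_left : ∀ a b c d, a ≠ c → a ≠ d → b ≠ c → b ≠ d → Commute (t a b) (r c d)
  mixed_right : ∀ a b c, a ≠ b → a ≠ c → b ≠ c →
    t b a * t c a * r b c = r b c * t c a * t b a
  mixed_left : ∀ a b c, a ≠ b → a ≠ c → b ≠ c →
    r a b * t c a * t c b = t c b * t c a * r a b

section Monoid

variable [Monoid M] {r t : ι → ι → M}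

theorem IsYangBaxter.op_flip (hr : IsYangBaxter r) :
    IsYangBaxter fun a b => MulOpposite.op (r b a) where
  commute a b c d hac had hbc hbd := (hr.commute b a d c hbd hbc had hac).op
  yangBaxter a b c hab hac hbc := by
    simp only [← MulOpposite.op_mul, ← mul_assoc]
    rw [hr.yangBaxter c b a hbc.symm hac.symm hab.symm]

theorem IsShufflePair.op_flip (h : IsShufflePair r t) :
    IsShufflePair (fun a b => MulOpposite.op (r b a)) fun a b => MulOpposite.op (t b a) where
  toIsYangBaxter := h.toIsYangBaxter.op_flip
  commute_right a b c d hac had hbc hbd := (h.commute_right b a d c hbd hbc had hac).op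
  commute_right_left a b c d hac had hbc hbd := (h.commute_right_left b a d c hbd hbc had hac).op
  mixed_right a b c hab hac hbc := by
    simp only [← MulOpposite.op_mul, ← mul_assoc]
    rw [h.mixed_left c b a hbc.symm hac.symm hab.symm]
  mixed_left a b c hab hac hbc := by
    simp only [← MulOpposite.op_mul, ← mul_assoc]
    rw [h.mixed_right c b a hbc.symm hac.symm hab.symm]

variable [LinearOrder ι] {A B C : Finset ι}

theorem op_crossProd_of_commute
    (hr : ∀ a b c d, a ≠ c → a ≠ d → b ≠ c → b ≠ d → Commute (r a b) (r c d))
    (hAB : Disjoint A B) :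
    MulOpposite.op (crossProd r A B) = crossProd (fun b a => MulOpposite.op (r a b)) B A :=
  op_crossProd fun _a ha _a' ha' _b hb _b' hb' haa' hbb' =>
    hr _ _ _ _ haa' (Finset.disjoint_left.mp hAB ha <| · ▸ hb')
      (Finset.disjoint_left.mp hAB ha' <| · ▸ hb) hbb'

theorem IsYangBaxter.op_crossProd_restrictGT (hr : IsYangBaxter r) (hAB : Disjoint A B) :
    MulOpposite.op (crossProd (restrictGT r) A B) =
      crossProd (restrictLT fun a b => MulOpposite.op (r b a)) B A := by
  rw [op_crossProd_of_commute (fun a b c d hac had hbc hbd => commute_restrictGT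
    (commute_restrictGT (hr.commute a b c d hac had hbc hbd).symm).symm) hAB]
  simp only [op_restrictGT]

theorem IsShufflePair.op_revCrossProd (h : IsShufflePair r t) (hAB : Disjoint A B) :
    MulOpposite.op (revCrossProd t A B) =
      revCrossProd (fun a b => MulOpposite.op (t b a)) B A :=
  op_crossProd_of_commute (fun a b c d hac had hbc hbd => h.commute_right b a d c hbd hbc had hac)
    hAB.symm

theorem IsYangBaxter.commute_descProd_crossProd_restrictLT (hr : IsYangBaxter r) {p : ι}
    (hAB : Disjoint A B) (hAC : Disjoint A C) (hB : p ∉ B) (hC : p ∉ C) :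
    Commute (descProd A fun a => restrictLT r a p) (crossProd (restrictLT r) B C) :=
  commute_crossProd fun b hb c hc => .symm <| commute_descProd fun a ha =>
    .symm <| commute_restrictLT <| .symm <| commute_restrictLT <|
      hr.commute b c a p (Finset.disjoint_right.mp hAB hb <| · ▸ ha) (ne_of_mem_of_not_mem hb hB)
        (Finset.disjoint_right.mp hAC hc <| · ▸ ha) (ne_of_mem_of_not_mem hc hC)

theorem IsYangBaxter.descProd_union_mul_crossProd (hr : IsYangBaxter r) {p : ι}
    (hAB : Disjoint A B) (hpA : p ∉ A) (hpB : ∀ b ∈ B, b < p) :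
    (descProd (A ∪ B) fun a => restrictLT r a p) * crossProd (restrictLT r) A B =
      crossProd (restrictLT r) A B * (descProd A fun a => restrictLT r a p) *
        descProd B fun b => restrictLT r b p := by
  refine descProd_union_mul_crossProd_restrictLT hAB (fun z _ x hx y hy hzx hzy => ?_)
    fun x _ y hy hxy => ?_
  · exact .symm <| commute_restrictLT <| hr.commute x y z p hzx.symm (ne_of_mem_of_not_mem hx hpA)
      hzy.symm (hpB y hy).ne
  · have hyp := hpB y hy
    simp only [restrictLT, hyp, hxy.trans hyp, if_true]
    exact (hr.yangBaxter x y p hxy.ne (hxy.trans hyp).ne hyp.ne).symm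

theorem IsYangBaxter.crossProd_restrictLT_mul (hr : IsYangBaxter r) (hAB : Disjoint A B)
    (hAC : Disjoint A C) (hBC : Disjoint B C) :
    crossProd (restrictLT r) (A ∪ B) C * crossProd (restrictLT r) A B =
      crossProd (restrictLT r) A (B ∪ C) * crossProd (restrictLT r) B C := by
  revert hAB hAC
  refine disjoint_induction_on_max hBC (by simp) ?_ ?_ <;> intro B C p _ hB hC ih hAB hAC
  · rw [Finset.disjoint_insert_right] at hAB
    have hcomm := hr.commute_descProd_crossProd_restrictLT hAB.2 hAC
      (fun hp => (hB p hp).false) fun hp => (hC p hp).false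
    have hp : ∀ c ∈ C, restrictLT r p c = 1 := fun c hc => if_neg (hC c hc).not_gt
    rw [Finset.union_insert, Finset.insert_union, crossProd_insert_left_of_eq_one hp,
      crossProd_insert_left_of_eq_one hp, crossProd_insert_max_right hB, ← mul_assoc,
      ih hAB.2 hAC, crossProd_insert_max_right (by grind)]
    simp only [mul_assoc, hcomm.eq]
  · rw [Finset.disjoint_insert_right] at hAC
    have hcomm := hr.commute_descProd_crossProd_restrictLT hAB hAC.2
      (fun hp => (hB p hp).false) fun hp => (hC p hp).false
    rw [Finset.union_insert, crossProd_insert_max_right hC, crossProd_insert_max_right hC,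
      crossProd_insert_max_right (by grind), mul_assoc,
      hr.descProd_union_mul_crossProd hAB hAC.1 hB]
    simp only [← mul_assoc]
    rw [ih hAB hAC.2]
    simp only [mul_assoc, hcomm.left_comm]

theorem IsYangBaxter.crossProd_restrictGT_mul (hr : IsYangBaxter r) (hAB : Disjoint A B)
    (hAC : Disjoint A C) (hBC : Disjoint B C) :
    crossProd (restrictGT r) A B * crossProd (restrictGT r) (A ∪ B) C =
      crossProd (restrictGT r) B C * crossProd (restrictGT r) A (B ∪ C) := by
  have hdual := hr.op_flip.crossProd_restrictLT_mul hBC.symm hAC.symm hAB.symm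
  rw [← hr.op_crossProd_restrictGT hBC, ← hr.op_crossProd_restrictGT hAB,
    Finset.union_comm C B, Finset.union_comm B A,
    ← hr.op_crossProd_restrictGT (Finset.disjoint_union_right.mpr ⟨hAB, hAC⟩),
    ← hr.op_crossProd_restrictGT (Finset.disjoint_union_left.mpr ⟨hAC, hBC⟩)] at hdual
  exact (MulOpposite.op_injective hdual).symm

theorem IsShufflePair.revCrossProd_mul_crossProd (h : IsShufflePair r t) (hAB : Disjoint A B)
    (hAC : Disjoint A C) (hBC : Disjoint B C) :
    revCrossProd t A (B ∪ C) * crossProd (restrictLT r) B C =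
      crossProd (restrictLT r) B C * revCrossProd t A B * revCrossProd t A C := by
  have hrow : ∀ a ∈ A, SemiconjBy (crossProd (restrictLT r) B C)
      (descProd B (t a) * descProd C (t a)) (descProd (B ∪ C) (t a)) := by
    intro a ha
    have haB := Finset.disjoint_left.mp hAB ha
    have haC := Finset.disjoint_left.mp hAC ha
    rw [SemiconjBy, ← mul_assoc, eq_comm]
    refine descProd_union_mul_crossProd_restrictLT hBC (fun z _ x hx y hy hzx hzy => ?_)
      fun x hx y hy hxy => ?_
    · exact h.commute_right_left a z x y (ne_of_mem_of_not_mem hx haB).symm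
        (ne_of_mem_of_not_mem hy haC).symm hzx hzy
    · exact (h.mixed_left x y a hxy.ne (ne_of_mem_of_not_mem hx haB)
        (ne_of_mem_of_not_mem hy haC)).symm
  have hT : (ascProd A fun a => descProd B (t a) * descProd C (t a)) =
      revCrossProd t A B * revCrossProd t A C := by
    refine ascProd_mul fun a ha a' ha' haa' => ?_
    exact commute_descProd_descProd fun c hc b hb => h.commute_right a c a' b haa'
      (Finset.disjoint_left.mp hAB ha <| · ▸ hb) (Finset.disjoint_left.mp hAC ha' <| · ▸ hc)
      (Finset.disjoint_left.mp hBC hb <| · ▸ hc)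
  rw [mul_assoc, ← hT]
  exact (semiconjBy_ascProd hrow).eq.symm

theorem IsShufflePair.crossProd_mul_revCrossProd (h : IsShufflePair r t) (hAB : Disjoint A B)
    (hAC : Disjoint A C) (hBC : Disjoint B C) :
    crossProd (restrictGT r) A B * revCrossProd t (A ∪ B) C =
      revCrossProd t A C * revCrossProd t B C * crossProd (restrictGT r) A B := by
  have hdual := h.op_flip.revCrossProd_mul_crossProd hBC.symm hAC.symm hAB.symm
  rw [← h.op_crossProd_restrictGT hAB, ← h.op_revCrossProd hBC, ← h.op_revCrossProd hAC,
    Finset.union_comm B A,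
    ← h.op_revCrossProd (Finset.disjoint_union_left.mpr ⟨hAC, hBC⟩), mul_assoc] at hdual
  exact MulOpposite.op_injective hdual

/-- The summand of the shuffle product of `x`, acting on the sites `A`, and `y`, acting on the
sites `B`. -/
def shuffleTerm (r t : ι → ι → M) (A B : Finset ι) (x y : M) : M :=
  crossProd (restrictLT r) A B * x * revCrossProd t A B * y * crossProd (restrictGT r) A B

theorem shuffleTerm_empty_left (r t : ι → ι → M) (B : Finset ι) (x y : M) :
    shuffleTerm r t ∅ B x y = x * y := by
  simp [shuffleTerm, revCrossProd]

theorem shuffleTerm_empty_right (r t : ι → ι → M) (A : Finset ι) (x y : M) :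
    shuffleTerm r t A ∅ x y = x * y := by
  simp [shuffleTerm, revCrossProd]

theorem IsShufflePair.shuffleTerm_assoc (h : IsShufflePair r t) (hAB : Disjoint A B)
    (hAC : Disjoint A C) (hBC : Disjoint B C) {x y z : M}
    (hx : ∀ b ∈ B, ∀ c ∈ C, Commute x (r b c)) (hy : ∀ a ∈ A, ∀ c ∈ C, Commute y (t a c))
    (hz : ∀ a ∈ A, ∀ b ∈ B, Commute z (r a b)) :
    shuffleTerm r t (A ∪ B) C (shuffleTerm r t A B x y) z =
      shuffleTerm r t A (B ∪ C) x (shuffleTerm r t B C y z) := by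
  have hX := h.crossProd_restrictLT_mul hAB hAC hBC
  have hY := h.crossProd_restrictGT_mul hAB hAC hBC
  have hYT := h.crossProd_mul_revCrossProd hAB hAC hBC
  have hTX := h.revCrossProd_mul_crossProd hAB hAC hBC
  have hxX : Commute x (crossProd (restrictLT r) B C) :=
    commute_crossProd fun b hb c hc => commute_restrictLT (hx b hb c hc)
  have hyT : Commute y (revCrossProd t A C) :=
    commute_crossProd fun c hc a ha => hy a ha c hc
  have hzY : Commute z (crossProd (restrictGT r) A B) :=
    commute_crossProd fun a ha b hb => commute_restrictGT (hz a ha b hb)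
  unfold shuffleTerm
  set X := crossProd (restrictLT r)
  set Y := crossProd (restrictGT r)
  set T := revCrossProd t
  calc X (A ∪ B) C * (X A B * x * T A B * y * Y A B) * T (A ∪ B) C * z * Y (A ∪ B) C
      = (X (A ∪ B) C * X A B) * x * T A B * y * (Y A B * T (A ∪ B) C) * z * Y (A ∪ B) C := by
        simp only [mul_assoc]
    _ = X A (B ∪ C) * (X B C * x) * T A B * (y * T A C) * T B C * (Y A B * z) *
          Y (A ∪ B) C := by
        rw [hX, hYT]; simp only [mul_assoc]
    _ = X A (B ∪ C) * x * (X B C * T A B * T A C) * y * T B C * z * (Y A B * Y (A ∪ B) C) := by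
        rw [← hxX.eq, hyT.eq, ← hzY.eq]; simp only [mul_assoc]
    _ = X A (B ∪ C) * x * (T A (B ∪ C) * X B C) * y * T B C * z * (Y B C * Y A (B ∪ C)) := by
        rw [hTX, hY]
    _ = _ := by simp only [mul_assoc]

theorem map_shuffleTerm {κ M' : Type*} [LinearOrder κ] [Monoid M'] (φ : M →* M') (e : ι ↪o κ)
    {r' t' : κ → κ → M'} (hr : ∀ a b, φ (r a b) = r' (e a) (e b))
    (ht : ∀ a b, φ (t a b) = t' (e a) (e b)) (A B : Finset ι) (x y : M) :
    φ (shuffleTerm r t A B x y) =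
      shuffleTerm r' t' (A.map e.toEmbedding) (B.map e.toEmbedding) (φ x) (φ y) := by
  have hLT : ∀ a b, φ (restrictLT r a b) = restrictLT r' (e a) (e b) := fun a b => by
    simp only [restrictLT, apply_ite φ, hr, map_one, e.lt_iff_lt]
  have hGT : ∀ a b, φ (restrictGT r a b) = restrictGT r' (e a) (e b) := fun a b => by
    simp only [restrictGT, apply_ite φ, hr, map_one, e.lt_iff_lt]
  have hflip : ∀ b a, φ (flip t b a) = flip t' (e b) (e a) := fun b a => ht a b
  simp only [shuffleTerm, revCrossProd, map_mul, map_crossProd, crossProd_map, hLT, hGT, hflip]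

end Monoid

variable [LinearOrder ι]

theorem shuffleTerm_sum_left [Semiring M] {α : Type*} (r t : ι → ι → M) (A B : Finset ι)
    (s : Finset α) (x : α → M) (y : M) :
    shuffleTerm r t A B (∑ i ∈ s, x i) y = ∑ i ∈ s, shuffleTerm r t A B (x i) y := by
  simp only [shuffleTerm, Finset.mul_sum, Finset.sum_mul]

theorem shuffleTerm_sum_right [Semiring M] {α : Type*} (r t : ι → ι → M) (A B : Finset ι)
    (s : Finset α) (x : M) (y : α → M) :
    shuffleTerm r t A B x (∑ i ∈ s, y i) = ∑ i ∈ s, shuffleTerm r t A B x (y i) := by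
  simp only [shuffleTerm, Finset.mul_sum, Finset.sum_mul]

end ShufflePairs

section Embedding

variable {K : Type*} [Field K] {n k l m N : ℕ}

theorem embed_apply (ι : Fin k → Fin N) (X : Matrix (Idx n k) (Idx n k) K) (f g : Idx n N) :
    embed ι X f g = if ∀ b ∉ Set.range ι, f b = g b then X (f ∘ ι) (g ∘ ι) else 0 := by
  simp only [embed, ← ite_or, Finset.prod_ite_zero, Finset.prod_const_one, mul_ite, mul_one,
    mul_zero, Finset.mem_univ, true_imp_iff, Finset.mem_image, true_and, Set.mem_range,
    or_iff_not_imp_left]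

theorem embed_zero (ι : Fin k → Fin N) :
    embed ι (0 : Matrix (Idx n k) (Idx n k) K) = 0 := by
  ext f g
  simp [embed]

theorem embed_sum {α : Type*} (ι : Fin k → Fin N) (s : Finset α)
    (X : α → Matrix (Idx n k) (Idx n k) K) :
    embed ι (∑ i ∈ s, X i) = ∑ i ∈ s, embed ι (X i) := by
  ext f g
  simp [embed, Matrix.sum_apply, Finset.sum_mul]

theorem embed_id (X : Matrix (Idx n N) (Idx n N) K) : embed id X = X := by
  ext f g
  simp [embed_apply]

theorem embed_embed {e : Fin N → Fin m} (he : Function.Injective e) (ι : Fin k → Fin N)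
    (X : Matrix (Idx n k) (Idx n k) K) : embed e (embed ι X) = embed (e ∘ ι) X := by
  ext f g
  simp only [embed_apply, ← ite_and, Function.comp_assoc]
  refine if_congr ⟨fun ⟨he', hι'⟩ b hb => ?_, fun h => ⟨fun b hb => ?_, fun c hc => ?_⟩⟩ rfl rfl
  · by_cases hbe : b ∈ Set.range e
    · obtain ⟨c, rfl⟩ := hbe
      refine hι' c fun hc => hb ?_
      rw [Set.range_comp]
      exact Set.mem_image_of_mem e hc
    · exact he' b hbe
  · exact h b fun hb' => hb (Set.range_comp_subset_range ι e hb')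
  · refine h (e c) ?_
    rwa [Set.range_comp, he.mem_set_image]

/-- The splitting of a multi-index into its entries at the sites `ι 0, ι 1, …` and its entries at
the remaining sites. -/
noncomputable def splitIdx {ι : Fin k → Fin N} (hι : Function.Injective ι) :
    Idx n N ≃ Idx n k × ({b // b ∉ Set.range ι} → Fin n) :=
  (Equiv.piEquivPiSubtypeProd (· ∈ Set.range ι) _).trans <|
    ((Equiv.ofInjective ι hι).symm.arrowCongr (Equiv.refl _)).prodCongr (Equiv.refl _)

open scoped Kronecker in
theorem embed_eq_submatrix_kronecker {ι : Fin k → Fin N} (hι : Function.Injective ι)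
    (X : Matrix (Idx n k) (Idx n k) K) :
    embed ι X = (X ⊗ₖ (1 : Matrix _ _ K)).submatrix (splitIdx hι) (splitIdx hι) := by
  ext f g
  have hcompl : (splitIdx hι f).2 = (splitIdx hι g).2 ↔ ∀ b ∉ Set.range ι, f b = g b := by
    simp [splitIdx, funext_iff]
  simp only [Matrix.submatrix_apply, Matrix.kroneckerMap_apply, Matrix.one_apply, hcompl, mul_ite,
    mul_one, mul_zero]
  exact embed_apply ι X f g

/-- The embedding `X ↦ X_{a₁…a_k}` for distinct `a₁, …, a_k`. -/
def embedHom {ι : Fin k → Fin N} (hι : Function.Injective ι) :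
    Matrix (Idx n k) (Idx n k) K →* Matrix (Idx n N) (Idx n N) K where
  toFun := embed ι
  map_one' := by
    rw [embed_eq_submatrix_kronecker hι, Matrix.one_kronecker_one, Matrix.submatrix_one_equiv]
  map_mul' X Y := by
    simp only [embed_eq_submatrix_kronecker hι, Matrix.submatrix_mul_equiv,
      ← Matrix.mul_kronecker_mul, one_mul]

theorem embed_mul_embed_apply {ι : Fin k → Fin N} {κ : Fin l → Fin N}
    (h : Disjoint (Set.range ι) (Set.range κ)) (X : Matrix (Idx n k) (Idx n k) K)
    (Y : Matrix (Idx n l) (Idx n l) K) (f g : Idx n N) :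
    (embed ι X * embed κ Y) f g =
      if ∀ b, b ∉ Set.range ι ∧ b ∉ Set.range κ → f b = g b then
        X (f ∘ ι) (g ∘ ι) * Y (f ∘ κ) (g ∘ κ) else 0 := by
  let w : Idx n N := (Set.range ι).piecewise g f
  have hw : ∀ b ∈ Set.range ι, w b = g b := fun b => Set.piecewise_eq_of_mem _ _ _
  have hw' : ∀ b ∉ Set.range ι, w b = f b := fun b => Set.piecewise_eq_of_notMem _ _ _
  rw [Matrix.mul_apply, Finset.sum_eq_single w]
  · have hwι : w ∘ ι = g ∘ ι := funext fun i => hw _ ⟨i, rfl⟩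
    have hwκ : w ∘ κ = f ∘ κ := funext fun j => hw' _ (Set.disjoint_right.mp h ⟨j, rfl⟩)
    have hiff : (∀ b ∉ Set.range κ, w b = g b) ↔
        ∀ b, b ∉ Set.range ι ∧ b ∉ Set.range κ → f b = g b := by grind
    rw [embed_apply, embed_apply, if_pos fun b hb => (hw' b hb).symm, hwι, hwκ, mul_ite, mul_zero,
      if_congr hiff rfl rfl]
  · intro v _ hv
    simp only [embed_apply, ite_mul, mul_ite, zero_mul, mul_zero, ← ite_and]
    refine if_neg fun hfg => hv (funext fun b => ?_)
    by_cases hb : b ∈ Set.range ι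
    · rw [hw b hb, hfg.1 b (Set.disjoint_left.mp h hb)]
    · rw [hw' b hb, hfg.2 b hb]
  · simp

theorem embed_commute {ι : Fin k → Fin N} {κ : Fin l → Fin N}
    (h : Disjoint (Set.range ι) (Set.range κ)) (X : Matrix (Idx n k) (Idx n k) K)
    (Y : Matrix (Idx n l) (Idx n l) K) : Commute (embed ι X) (embed κ Y) := by
  ext f g
  simp only [embed_mul_embed_apply h, embed_mul_embed_apply h.symm, and_comm, mul_comm]

/-- `R_{ab}` for sites `a, b`. -/
def embedPair (R : Matrix (Idx n 2) (Idx n 2) K) (a b : Fin N) : Matrix (Idx n N) (Idx n N) K :=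
  embed ![a, b] R

theorem embedPair_commute (R S : Matrix (Idx n 2) (Idx n 2) K) {a b c d : Fin N} (hac : a ≠ c)
    (had : a ≠ d) (hbc : b ≠ c) (hbd : b ≠ d) : Commute (embedPair R a b) (embedPair S c d) :=
  embed_commute (by simp [hac.symm, had.symm, hbc.symm, hbd.symm]) R S

theorem embedHom_embedPair {ι : Fin k → Fin N} (hι : Function.Injective ι)
    (R : Matrix (Idx n 2) (Idx n 2) K) (a b : Fin k) :
    embedHom hι (embedPair R a b) = embedPair R (ι a) (ι b) := by
  have hcomp : ι ∘ ![a, b] = ![ι a, ι b] := by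
    ext i
    fin_cases i <;> rfl
  exact (embed_embed hι ![a, b] R).trans (congrArg (embed · R) hcomp)

theorem injective_vec_three {α : Type*} {a b c : α} (hab : a ≠ b) (hac : a ≠ c) (hbc : b ≠ c) :
    Function.Injective ![a, b, c] := by
  intro i j
  fin_cases i <;> fin_cases j <;> simp [hab, hac, hbc, hab.symm, hac.symm, hbc.symm]

theorem isShufflePair_embedPair {R Rt : Matrix (Idx n 2) (Idx n 2) K}
    (hYBE : embedPair R (0 : Fin 3) 1 * embedPair R 0 2 * embedPair R 1 2 =
      embedPair R 1 2 * embedPair R 0 2 * embedPair R 0 1)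
    (hM1 : embedPair Rt (1 : Fin 3) 0 * embedPair Rt 2 0 * embedPair R 1 2 =
      embedPair R 1 2 * embedPair Rt 2 0 * embedPair Rt 1 0)
    (hM2 : embedPair R (0 : Fin 3) 1 * embedPair Rt 2 0 * embedPair Rt 2 1 =
      embedPair Rt 2 1 * embedPair Rt 2 0 * embedPair R 0 1) (N : ℕ) :
    IsShufflePair (embedPair R : Fin N → Fin N → _) (embedPair Rt) where
  commute _ _ _ _ := embedPair_commute R R
  yangBaxter _ _ _ hab hac hbc := by
    simpa [embedHom_embedPair] using congrArg (embedHom (injective_vec_three hab hac hbc)) hYBE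
  commute_right _ _ _ _ := embedPair_commute Rt Rt
  commute_right_left _ _ _ _ := embedPair_commute Rt R
  mixed_right _ _ _ hab hac hbc := by
    simpa [embedHom_embedPair] using congrArg (embedHom (injective_vec_three hab hac hbc)) hM1
  mixed_left _ _ _ hab hac hbc := by
    simpa [embedHom_embedPair] using congrArg (embedHom (injective_vec_three hab hac hbc)) hM2

end Embedding

section ShuffleAlgebra

variable {K : Type*} [Field K] {n k l m N : ℕ}

/-- The component of `x` of degree `#S` acting on the sites in `S`, taken in increasing order. -/
def embedOn (S : Finset (Fin N)) (x : GA n K) : Matrix (Idx n N) (Idx n N) K :=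
  embed (S.orderEmbOfFin rfl) (x S.card)

theorem embedOn_eq {S : Finset (Fin N)} (hS : S.card = k) (x : GA n K) :
    embedOn S x = embed (S.orderEmbOfFin hS) (x k) := by
  subst hS
  rfl

theorem embedOn_univ (x : GA n K) : embedOn (Finset.univ : Finset (Fin N)) x = x N := by
  have hid : ⇑(Finset.univ.orderEmbOfFin (Finset.card_fin N)) = id :=
    (Finset.orderEmbOfFin_unique _ (fun i => Finset.mem_univ i) strictMono_id).symm
  rw [embedOn_eq (Finset.card_fin N), hid, embed_id]

theorem embedOn_empty_gaOne : embedOn (∅ : Finset (Fin N)) (gaOne : GA n K) = 1 :=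
  map_one (embedHom (Finset.orderEmbOfFin ∅ rfl).injective)

theorem embedOn_gaOne_of_nonempty {S : Finset (Fin N)} (hS : S.Nonempty) :
    embedOn S (gaOne : GA n K) = 0 := by
  rw [embedOn, gaOne, dif_neg hS.card_ne_zero, embed_zero]

theorem embed_embedOn (e : Fin m ↪o Fin N) (S : Finset (Fin m)) (x : GA n K) :
    embed e (embedOn S x) = embedOn (S.map e.toEmbedding) x := by
  have hcomp : e ∘ S.orderEmbOfFin rfl =
      (S.map e.toEmbedding).orderEmbOfFin (S.card_map e.toEmbedding) :=
    Finset.orderEmbOfFin_unique _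
      (fun i => Finset.mem_map_of_mem _ (Finset.orderEmbOfFin_mem _ _ i))
      (e.strictMono.comp (OrderEmbedding.strictMono _))
  rw [embedOn, embed_embed e.injective, hcomp, embedOn_eq (S.card_map e.toEmbedding)]

theorem embedOn_commute_embedPair {S : Finset (Fin N)} {a b : Fin N} (ha : a ∉ S) (hb : b ∉ S)
    (x : GA n K) (R : Matrix (Idx n 2) (Idx n 2) K) : Commute (embedOn S x) (embedPair R a b) :=
  embed_commute (by simp [ha, hb]) _ _

variable (R Rt : Matrix (Idx n 2) (Idx n 2) K)

theorem prodRlt_eq_crossProd (a : Fin k ↪o Fin N) (b : Fin l ↪o Fin N) :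
    prodRlt R a b = crossProd (restrictLT (embedPair R)) (Finset.univ.map a.toEmbedding)
      (Finset.univ.map b.toEmbedding) := by
  rw [crossProd_map]
  simp only [crossProd, ascProd, descProd, Fin.sort_univ]
  rfl

theorem prodRgt_eq_crossProd (a : Fin k ↪o Fin N) (b : Fin l ↪o Fin N) :
    prodRgt R a b = crossProd (restrictGT (embedPair R)) (Finset.univ.map a.toEmbedding)
      (Finset.univ.map b.toEmbedding) := by
  rw [crossProd_map]
  simp only [crossProd, ascProd, descProd, Fin.sort_univ]
  rfl

theorem prodRt_eq_revCrossProd (a : Fin k ↪o Fin N) (b : Fin l ↪o Fin N) :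
    prodRt Rt a b = revCrossProd (embedPair Rt) (Finset.univ.map a.toEmbedding)
      (Finset.univ.map b.toEmbedding) := by
  rw [revCrossProd, crossProd_map]
  simp only [crossProd, ascProd, descProd, Fin.sort_univ]
  rfl

theorem recast_shufMul (h : k + l = N) (x y : GA n K) :
    recast h (shufMul R Rt k l (x k) (y l)) = ∑ S : Finset (Fin N) with S.card = k,
      shuffleTerm (embedPair R) (embedPair Rt) S Sᶜ (embedOn S x) (embedOn Sᶜ y) := by
  subst h
  unfold recast shufMul
  refine .symm <| (Finset.sum_subtype _ (by simp) _).trans <| Finset.sum_congr rfl ?_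
  rintro ⟨S, hS⟩ -
  have hSc : Sᶜ.card = l := by rw [Finset.card_compl, hS, Fintype.card_fin, Nat.add_sub_cancel_left]
  simp only [prodRlt_eq_crossProd, prodRgt_eq_crossProd, prodRt_eq_revCrossProd, shuffleTerm,
    Finset.map_orderEmbOfFin_univ, embedOn_eq hS, embedOn_eq hSc]

theorem gaMul_apply (x y : GA n K) (N : ℕ) :
    gaMul R Rt x y N = ∑ S : Finset (Fin N),
      shuffleTerm (embedPair R) (embedPair Rt) S Sᶜ (embedOn S x) (embedOn Sᶜ y) := by
  have hcard : ∀ S ∈ (Finset.univ : Finset (Finset (Fin N))), S.card ∈ Finset.range (N + 1) :=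
    fun S _ => Finset.mem_range.mpr (Nat.lt_succ_of_le (card_finset_fin_le S))
  rw [← Finset.sum_fiberwise_of_maps_to hcard]
  exact (Finset.sum_congr rfl fun k _ => recast_shufMul R Rt _ x y).trans <|
    Finset.sum_attach (Finset.range (N + 1)) fun k => ∑ S : Finset (Fin N) with S.card = k,
      shuffleTerm (embedPair R) (embedPair Rt) S Sᶜ (embedOn S x) (embedOn Sᶜ y)

theorem embedOn_gaMul (S : Finset (Fin N)) (x y : GA n K) :
    embedOn S (gaMul R Rt x y) = ∑ U ∈ S.powerset,
      shuffleTerm (embedPair R) (embedPair Rt) U (S \ U) (embedOn U x) (embedOn (S \ U) y) := by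
  set e := S.orderEmbOfFin rfl
  have hS : Finset.univ.map e.toEmbedding = S := Finset.map_orderEmbOfFin_univ S rfl
  have hterm (U : Finset (Fin S.card)) :
      embed e (shuffleTerm (embedPair R) (embedPair Rt) U Uᶜ (embedOn U x) (embedOn Uᶜ y)) =
        shuffleTerm (embedPair R) (embedPair Rt) (U.map e.toEmbedding) (S \ U.map e.toEmbedding)
          (embedOn (U.map e.toEmbedding) x) (embedOn (S \ U.map e.toEmbedding) y) := by
    have hcompl : Uᶜ.map e.toEmbedding = S \ U.map e.toEmbedding := by
      rw [Finset.compl_eq_univ_sdiff, Finset.map_sdiff, hS]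
    rw [← hcompl, ← embed_embedOn, ← embed_embedOn]
    exact map_shuffleTerm (r := embedPair R) (t := embedPair Rt) (embedHom e.injective) e
      (embedHom_embedPair e.injective R) (embedHom_embedPair e.injective Rt) U Uᶜ _ _
  rw [embedOn, gaMul_apply, embed_sum]
  refine Finset.sum_nbij (Finset.map e.toEmbedding) (fun U _ => ?_)
    (Finset.map_injective _).injOn (fun V hV => ?_) fun U _ => hterm U
  · exact Finset.mem_powerset.mpr ((Finset.map_subset_map.mpr U.subset_univ).trans hS.subset)
  · obtain ⟨U, -, rfl⟩ :=
      Finset.subset_map_iff.mp ((Finset.mem_powerset.mp (Finset.mem_coe.mp hV)).trans hS.superset)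
    exact ⟨U, by simp, rfl⟩

theorem gaOne_gaMul (x : GA n K) : gaMul R Rt gaOne x = x := by
  funext N
  rw [gaMul_apply, Fintype.sum_eq_single ∅ fun S hS => ?_, embedOn_empty_gaOne,
    Finset.compl_empty, embedOn_univ, shuffleTerm_empty_left, one_mul]
  rw [embedOn_gaOne_of_nonempty (Finset.nonempty_iff_ne_empty.mpr hS)]
  simp [shuffleTerm]

theorem gaMul_gaOne (x : GA n K) : gaMul R Rt x gaOne = x := by
  funext N
  rw [gaMul_apply, Fintype.sum_eq_single Finset.univ fun S hS => ?_, Finset.compl_univ,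
    embedOn_empty_gaOne, embedOn_univ, shuffleTerm_empty_right, mul_one]
  have hSc : Sᶜ ≠ ∅ := mt (Finset.compl_eq_empty_iff S).mp hS
  rw [embedOn_gaOne_of_nonempty (Finset.nonempty_iff_ne_empty.mpr hSc)]
  simp [shuffleTerm]

theorem sum_powerset_sdiff_compl {α β : Type*} [Fintype α] [DecidableEq α] [AddCommMonoid β]
    (F : Finset α → Finset α → Finset α → β) :
    ∑ S : Finset α, ∑ U ∈ S.powerset, F U (S \ U) Sᶜ =
      ∑ S : Finset α, ∑ U ∈ Sᶜ.powerset, F S U (Sᶜ \ U) := by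
  rw [Finset.sum_sigma', Finset.sum_sigma']
  refine Finset.sum_bij' (fun p _ => ⟨p.2, p.1 \ p.2⟩) (fun p _ => ⟨p.1 ∪ p.2, p.1⟩)
      ?_ ?_ ?_ ?_ ?_ <;> rintro ⟨S, U⟩ hSU <;>
    simp only [Finset.mem_sigma, Finset.mem_univ, true_and, Finset.mem_powerset] at hSU ⊢
  · exact fun a ha => Finset.mem_compl.mpr (Finset.mem_sdiff.mp ha).2
  · exact Finset.subset_union_left
  · rw [Finset.union_sdiff_of_subset hSU]
  · rw [Finset.union_sdiff_cancel_left (Finset.subset_compl_iff_disjoint_left.mp hSU)]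
  · rw [Finset.compl_eq_univ_sdiff U, sdiff_sdiff_left, Finset.sup_eq_union,
      Finset.union_sdiff_of_subset hSU, Finset.compl_eq_univ_sdiff]

variable {R Rt}

theorem shuffleTerm_embedOn_assoc
    (h : IsShufflePair (embedPair R : Fin N → Fin N → _) (embedPair Rt)) {A B C : Finset (Fin N)}
    (hAB : Disjoint A B) (hAC : Disjoint A C) (hBC : Disjoint B C) (x y z : GA n K) :
    shuffleTerm (embedPair R) (embedPair Rt) (A ∪ B) C
        (shuffleTerm (embedPair R) (embedPair Rt) A B (embedOn A x) (embedOn B y)) (embedOn C z) =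
      shuffleTerm (embedPair R) (embedPair Rt) A (B ∪ C) (embedOn A x)
        (shuffleTerm (embedPair R) (embedPair Rt) B C (embedOn B y) (embedOn C z)) := by
  refine h.shuffleTerm_assoc hAB hAC hBC (fun b hb c hc => ?_) (fun a ha c hc => ?_)
    fun a ha b hb => ?_
  · exact embedOn_commute_embedPair (Finset.disjoint_right.mp hAB hb)
      (Finset.disjoint_right.mp hAC hc) x R
  · exact embedOn_commute_embedPair (Finset.disjoint_left.mp hAB ha)
      (Finset.disjoint_right.mp hBC hc) y Rt
  · exact embedOn_commute_embedPair (Finset.disjoint_left.mp hAC ha)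
      (Finset.disjoint_left.mp hBC hb) z R

theorem gaMul_assoc (h : ∀ N, IsShufflePair (embedPair R : Fin N → Fin N → _) (embedPair Rt))
    (x y z : GA n K) : gaMul R Rt (gaMul R Rt x y) z = gaMul R Rt x (gaMul R Rt y z) := by
  funext N
  let term := shuffleTerm (embedPair R : Fin N → Fin N → _) (embedPair Rt)
  calc gaMul R Rt (gaMul R Rt x y) z N
      = ∑ S : Finset (Fin N), ∑ U ∈ S.powerset,
          term (U ∪ S \ U) Sᶜ (term U (S \ U) (embedOn U x) (embedOn (S \ U) y))
            (embedOn Sᶜ z) := by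
        rw [gaMul_apply]
        refine Finset.sum_congr rfl fun S _ => ?_
        rw [embedOn_gaMul, shuffleTerm_sum_left]
        refine Finset.sum_congr rfl fun U hU => ?_
        rw [Finset.union_sdiff_of_subset (Finset.mem_powerset.mp hU)]
    _ = ∑ S : Finset (Fin N), ∑ U ∈ Sᶜ.powerset,
          term (S ∪ U) (Sᶜ \ U) (term S U (embedOn S x) (embedOn U y)) (embedOn (Sᶜ \ U) z) :=
        sum_powerset_sdiff_compl fun A B C =>
          term (A ∪ B) C (term A B (embedOn A x) (embedOn B y)) (embedOn C z)
    _ = ∑ S : Finset (Fin N), ∑ U ∈ Sᶜ.powerset,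
          term S Sᶜ (embedOn S x) (term U (Sᶜ \ U) (embedOn U y) (embedOn (Sᶜ \ U) z)) := by
        refine Finset.sum_congr rfl fun S _ => Finset.sum_congr rfl fun U hU => ?_
        have hUS : U ⊆ Sᶜ := Finset.mem_powerset.mp hU
        have hassoc := shuffleTerm_embedOn_assoc (h N)
          (Finset.subset_compl_iff_disjoint_left.mp hUS)
          (disjoint_compl_right.mono_right Finset.sdiff_subset) Finset.disjoint_sdiff x y z
        rwa [Finset.union_sdiff_of_subset hUS] at hassoc
    _ = gaMul R Rt x (gaMul R Rt y z) N := by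
        simp only [gaMul_apply R Rt x, embedOn_gaMul, shuffleTerm_sum_right, term]

end ShuffleAlgebra

theorem shuffle_product_associative_general (n : ℕ) (K : Type*) [Field K]
    (R Rt : Matrix (Idx n 2) (Idx n 2) K)
    (hYBE : embed (![0, 1] : Fin 2 → Fin 3) R * embed (![0, 2] : Fin 2 → Fin 3) R *
        embed (![1, 2] : Fin 2 → Fin 3) R =
      embed (![1, 2] : Fin 2 → Fin 3) R * embed (![0, 2] : Fin 2 → Fin 3) R *
        embed (![0, 1] : Fin 2 → Fin 3) R)
    (hM1 : embed (![1, 0] : Fin 2 → Fin 3) Rt * embed (![2, 0] : Fin 2 → Fin 3) Rt *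
        embed (![1, 2] : Fin 2 → Fin 3) R =
      embed (![1, 2] : Fin 2 → Fin 3) R * embed (![2, 0] : Fin 2 → Fin 3) Rt *
        embed (![1, 0] : Fin 2 → Fin 3) Rt)
    (hM2 : embed (![0, 1] : Fin 2 → Fin 3) R * embed (![2, 0] : Fin 2 → Fin 3) Rt *
        embed (![2, 1] : Fin 2 → Fin 3) Rt =
      embed (![2, 1] : Fin 2 → Fin 3) Rt * embed (![2, 0] : Fin 2 → Fin 3) Rt *
        embed (![0, 1] : Fin 2 → Fin 3) R) :
    (∀ x y z : GA n K,
      gaMul R Rt (gaMul R Rt x y) z = gaMul R Rt x (gaMul R Rt y z)) ∧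
    (∀ x : GA n K, gaMul R Rt gaOne x = x ∧ gaMul R Rt x gaOne = x) :=
  ⟨gaMul_assoc (isShufflePair_embedPair hYBE hM1 hM2),
    fun x => ⟨gaOne_gaMul R Rt x, gaMul_gaOne R Rt x⟩⟩

/-- Associativity and unitality of the shuffle product, under: Yang–Baxter for
`R`, the mixed Yang–Baxter relations for `R̃`, and unitarity
`R₁₂R₂₁ = f·Id = R₂₁R₁₂` with `R, R̃ ∈ Aut(V⊗V)`. -/
theorem shuffle_product_associative (n : ℕ) (K : Type*) [Field K]
    (R Rt : Matrix (Idx n 2) (Idx n 2) K) (f : K)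
    (hR : IsUnit R) (hRt : IsUnit Rt)
    (hYBE : embed (![0, 1] : Fin 2 → Fin 3) R * embed (![0, 2] : Fin 2 → Fin 3) R *
        embed (![1, 2] : Fin 2 → Fin 3) R =
      embed (![1, 2] : Fin 2 → Fin 3) R * embed (![0, 2] : Fin 2 → Fin 3) R *
        embed (![0, 1] : Fin 2 → Fin 3) R)
    (hM1 : embed (![1, 0] : Fin 2 → Fin 3) Rt * embed (![2, 0] : Fin 2 → Fin 3) Rt *
        embed (![1, 2] : Fin 2 → Fin 3) R =
      embed (![1, 2] : Fin 2 → Fin 3) R * embed (![2, 0] : Fin 2 → Fin 3) Rt *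
        embed (![1, 0] : Fin 2 → Fin 3) Rt)
    (hM2 : embed (![0, 1] : Fin 2 → Fin 3) R * embed (![2, 0] : Fin 2 → Fin 3) Rt *
        embed (![2, 1] : Fin 2 → Fin 3) Rt =
      embed (![2, 1] : Fin 2 → Fin 3) Rt * embed (![2, 0] : Fin 2 → Fin 3) Rt *
        embed (![0, 1] : Fin 2 → Fin 3) R)
    (hU1 : R * embed (![1, 0] : Fin 2 → Fin 2) R =
      f • (1 : Matrix (Idx n 2) (Idx n 2) K))
    (hU2 : embed (![1, 0] : Fin 2 → Fin 2) R * R =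
      f • (1 : Matrix (Idx n 2) (Idx n 2) K)) :
    (∀ x y z : GA n K,
      gaMul R Rt (gaMul R Rt x y) z = gaMul R Rt x (gaMul R Rt y z)) ∧
    (∀ x : GA n K, gaMul R Rt gaOne x = x ∧ gaMul R Rt x gaOne = x) :=
  shuffle_product_associative_general n K R Rt hYBE hM1 hM2
end

section
/- For A, B ∈ End(V) and the R-matrices R̃⁺, R̃⁻ related by R̃⁻(x) = ((R̃⁺)^{†₁}(1/x))^{-1})^{†₁}_{21} (equivalently R̃⁺_{21}(z)^{†₁} R̃⁻_{12}(1/z)^{†₁} = Id), one has Tr_{V⊗V}(R̃⁺_{21}(z) A₂ R̃⁻_{12}(1/z) B₁) = Tr(A)Tr(B); taking the residue at z = q̄^{-2} yields Tr_{V⊗V}((12) A₂ · R̃⁻_{12}(q̄²) · B₁) = 0. -/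
/-!
STATEMENT 19: For A, B ∈ End(V) and the R-matrices R̃⁺, R̃⁻ related by
`R̃⁺₂₁(z)^{†₁} R̃⁻₁₂(1/z)^{†₁} = Id` (i.e.
`R̃⁻(x) = (((R̃⁺)^{†₁}(1/x))⁻¹)^{†₁}_{21}`), one has
`Tr_{V⊗V}(R̃⁺₂₁(z) A₂ R̃⁻₁₂(1/z) B₁) = Tr(A)·Tr(B)`;
taking the residue at `z = q̄⁻²` (where `Res R̃⁺ = (q⁻¹-q)·(12)`) yields
`Tr_{V⊗V}((12) A₂ · R̃⁻₁₂(q̄²) · B₁) = 0`.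
Here `R̃⁺(x) = R₂₁(1/(x q̄²))` for the quantum affine gl_n R-matrix R, and
`R̃⁻` is given by its explicit rational formula (with `q̄₋ = (qⁿ q̄)⁻¹`).
-/

/-- The quantum affine gl_n R-matrix (entries indexed by pairs). -/
def Rm (n : ℕ) {K : Type*} [Field K] (q x : K) :
    Matrix (Fin n × Fin n) (Fin n × Fin n) K := fun p p' =>
  (if p = p' then (if p.1 = p.2 then (q - x * q⁻¹) / (1 - x) else 1) else 0) +
  (if p.1 ≠ p.2 ∧ p'.1 = p.2 ∧ p'.2 = p.1 then
    (q - q⁻¹) * (if p.1 < p.2 then x else 1) / (1 - x) else 0)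

/-- The flip of tensor factors on `End(V ⊗ V)`. -/
def flipM {n : ℕ} {K : Type*} [Field K]
    (M : Matrix (Fin n × Fin n) (Fin n × Fin n) K) :
    Matrix (Fin n × Fin n) (Fin n × Fin n) K := fun p p' =>
  M (p.2, p.1) (p'.2, p'.1)

/-- Partial transposition `†₁` in the first tensor factor:
`E_ij ⊗ E_kl ↦ E_ji ⊗ E_kl`. -/
def dag1 {n : ℕ} {K : Type*} [Field K]
    (M : Matrix (Fin n × Fin n) (Fin n × Fin n) K) :
    Matrix (Fin n × Fin n) (Fin n × Fin n) K := fun p p' =>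
  M (p'.1, p.2) (p.1, p'.2)

/-- `R̃⁺(x) = R₂₁(1/(x q̄²))`. -/
def Rtp (n : ℕ) {K : Type*} [Field K] (q qbar x : K) :
    Matrix (Fin n × Fin n) (Fin n × Fin n) K :=
  flipM (Rm n q ((x * qbar ^ 2)⁻¹))

/-- `R̃⁻(x)`, given by its explicit formula
`Σ E_ii⊗E_jj ((q⁻¹ - xqq̄₋²)/(1-xq̄₋²))^{δ_ij}
  - (q-q⁻¹) Σ_{i≠j} E_ij⊗E_ji q^{2(j-i)} (xq̄₋²)^{δ(i<j)}/(1-xq̄₋²)`,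
with `q̄₋ = (qⁿ q̄)⁻¹`. -/
def Rtm (n : ℕ) {K : Type*} [Field K] (q qbar x : K) :
    Matrix (Fin n × Fin n) (Fin n × Fin n) K := fun p p' =>
  (if p = p' then
    (if p.1 = p.2 then
      (q⁻¹ - x * q * ((q ^ n * qbar)⁻¹) ^ 2) / (1 - x * ((q ^ n * qbar)⁻¹) ^ 2)
    else 1) else 0) +
  (if p.1 ≠ p.2 ∧ p'.1 = p.2 ∧ p'.2 = p.1 then
    -(q - q⁻¹) * q ^ (2 * ((p.2 : ℤ) - (p.1 : ℤ))) *
      (if p.1 < p.2 then x * ((q ^ n * qbar)⁻¹) ^ 2 else 1) /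
      (1 - x * ((q ^ n * qbar)⁻¹) ^ 2) else 0)

/-- `A₂ = 1 ⊗ A` on `V ⊗ V`. -/
def leg2 {n : ℕ} {K : Type*} [Field K] (A : Matrix (Fin n) (Fin n) K) :
    Matrix (Fin n × Fin n) (Fin n × Fin n) K := fun p p' =>
  if p.1 = p'.1 then A p.2 p'.2 else 0

/-- `B₁ = B ⊗ 1` on `V ⊗ V`. -/
def leg1 {n : ℕ} {K : Type*} [Field K] (B : Matrix (Fin n) (Fin n) K) :
    Matrix (Fin n × Fin n) (Fin n × Fin n) K := fun p p' =>
  if p.2 = p'.2 then B p.1 p'.1 else 0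

/-- The permutation operator `(12)`. -/
def permM (n : ℕ) (K : Type*) [Field K] :
    Matrix (Fin n × Fin n) (Fin n × Fin n) K := fun p p' =>
  if p'.1 = p.2 ∧ p'.2 = p.1 then 1 else 0

/-!
Partial transposition turns every operator occurring here into one that lives on the span of the
diagonal vectors `e_i ⊗ e_i`, up to an identity on the complement. On that span, let `T` be the
cyclic shift twisted so that `T ^ n = w`. Summing the geometric series gives
`(1 - a T)⁻¹ = (1 - a ^ n w)⁻¹ ∑_{m < n} a ^ m T ^ m`, whose entries are those of the R-matrices:
for `w = x / q̄²`,

* `R(w)^{†₁}` acts as `q (1 - T)⁻¹ (1 - q⁻² T)`,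
* `R̃⁻(x)^{†₁}` acts as `q⁻¹ (1 - q⁻² T)⁻¹ (1 - T)`,

and these are visibly inverse to each other. The first trace identity follows because
`Tr(M A₂ N B₁) = Tr(N^{†₁} M^{†₁} (Bᵀ ⊗ A))`. At `x = q̄²` we have `w = 1`, so `1 - T` kills the
all-ones vector; since `(12)^{†₁}` is the rank one operator with image `∑ e_i ⊗ e_i`, it follows
that `R̃⁻(q̄²)^{†₁} (12)^{†₁} = 0`, which gives the residue identity.
-/

open Matrix
open scoped Kronecker

section DiagonalBlock

variable {ι R : Type*} [Fintype ι] [DecidableEq ι] [Ring R]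

/-- The matrix of the inclusion `V → V ⊗ V`, `e_i ↦ e_i ⊗ e_i`. -/
def diagIncl (ι R : Type*) [DecidableEq ι] [Ring R] : Matrix (ι × ι) ι R :=
  (1 : Matrix (ι × ι) (ι × ι) R).submatrix id fun i => (i, i)

/-- The operator on `V ⊗ V` acting as `M` on the span of the `e_i ⊗ e_i` and as the identity on
the span of the `e_i ⊗ e_j` with `i ≠ j`. -/
def diagBlock (M : Matrix ι ι R) : Matrix (ι × ι) (ι × ι) R :=
  1 + diagIncl ι R * (M - 1) * (diagIncl ι R)ᵀ

theorem diagIncl_transpose_mul_diagIncl : (diagIncl ι R)ᵀ * diagIncl ι R = 1 := by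
  have diag_injective : Function.Injective fun i : ι => (i, i) := fun _ _ h => congrArg Prod.fst h
  rw [diagIncl, transpose_submatrix, ← submatrix_mul _ _ _ _ _ Function.bijective_id,
    transpose_one, one_mul, submatrix_one _ diag_injective]

theorem diagIncl_mul_mul_transpose_apply (M : Matrix ι ι R) (a b c d : ι) :
    (diagIncl ι R * M * (diagIncl ι R)ᵀ) (a, b) (c, d) = if a = b ∧ c = d then M a c else 0 := by
  simp only [diagIncl, mul_apply, transpose_apply, submatrix_apply, id, one_apply, Prod.mk.injEq,
    ite_and, ite_mul, mul_ite, one_mul, mul_one, zero_mul, mul_zero, Finset.sum_ite_eq,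
    Finset.mem_univ, if_true]
  grind

theorem diagBlock_apply (M : Matrix ι ι R) (a b c d : ι) :
    diagBlock M (a, b) (c, d) =
      if a = b ∧ c = d then M a c else if a = c ∧ b = d then 1 else 0 := by
  simp only [diagBlock, Matrix.add_apply, diagIncl_mul_mul_transpose_apply, Matrix.sub_apply,
    one_apply, Prod.mk.injEq]
  grind

theorem diagBlock_one : diagBlock (1 : Matrix ι ι R) = 1 := by
  simp [diagBlock]

theorem diagBlock_mul_diagIncl (M : Matrix ι ι R) :
    diagBlock M * diagIncl ι R = diagIncl ι R * M := by
  rw [diagBlock, Matrix.add_mul, Matrix.one_mul, Matrix.mul_assoc _ _ (diagIncl ι R),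
    diagIncl_transpose_mul_diagIncl, Matrix.mul_one, Matrix.mul_sub, Matrix.mul_one,
    add_sub_cancel]

theorem diagBlock_mul (M N : Matrix ι ι R) : diagBlock M * diagBlock N = diagBlock (M * N) := by
  calc diagBlock M * diagBlock N
      = diagBlock M + diagBlock M * diagIncl ι R * (N - 1) * (diagIncl ι R)ᵀ := by
        simp only [diagBlock.eq_1 N, mul_add, mul_one, Matrix.mul_assoc]
    _ = diagBlock (M * N) := by
        rw [diagBlock_mul_diagIncl]
        simp only [diagBlock, Matrix.mul_sub, Matrix.sub_mul, Matrix.mul_assoc, Matrix.one_mul]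
        abel

end DiagonalBlock

section PartialTranspose

variable {n : ℕ} {K : Type*} [Field K]

theorem leg1_eq_kronecker (B : Matrix (Fin n) (Fin n) K) : leg1 B = B ⊗ₖ 1 := by
  ext ⟨a, b⟩ ⟨c, d⟩
  simp [leg1, one_apply]

theorem leg2_eq_kronecker (A : Matrix (Fin n) (Fin n) K) : leg2 A = 1 ⊗ₖ A := by
  ext ⟨a, b⟩ ⟨c, d⟩
  simp [leg2, one_apply]

theorem dag1_mul_leg1 (M : Matrix (Fin n × Fin n) (Fin n × Fin n) K)
    (B : Matrix (Fin n) (Fin n) K) : dag1 (M * leg1 B) = leg1 Bᵀ * dag1 M := by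
  ext ⟨a, b⟩ ⟨c, d⟩
  simp [dag1, leg1, mul_apply, Fintype.sum_prod_type, mul_comm]

theorem dag1_mul_leg2 (M : Matrix (Fin n × Fin n) (Fin n × Fin n) K)
    (A : Matrix (Fin n) (Fin n) K) : dag1 (M * leg2 A) = dag1 M * leg2 A := by
  ext ⟨a, b⟩ ⟨c, d⟩
  simp [dag1, leg2, mul_apply, Fintype.sum_prod_type_right]

theorem trace_dag1_mul_dag1 (M N : Matrix (Fin n × Fin n) (Fin n × Fin n) K) :
    trace (dag1 M * dag1 N) = trace (M * N) := by
  simp only [trace, diag, mul_apply, dag1, ← Fintype.sum_prod_type']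
  let swapFirst : Equiv.Perm ((Fin n × Fin n) × (Fin n × Fin n)) :=
    Function.Involutive.toPerm (fun p => ((p.2.1, p.1.2), (p.1.1, p.2.2))) fun _ => rfl
  exact Fintype.sum_equiv swapFirst _ _ fun _ => rfl

theorem trace_mul_leg2_mul_mul_leg1 (M N : Matrix (Fin n × Fin n) (Fin n × Fin n) K)
    (A B : Matrix (Fin n) (Fin n) K) :
    trace (M * leg2 A * N * leg1 B) = trace (dag1 N * dag1 M * (Bᵀ ⊗ₖ A)) := by
  have leg2_mul_leg1 : leg2 A * leg1 Bᵀ = Bᵀ ⊗ₖ A := by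
    rw [leg1_eq_kronecker, leg2_eq_kronecker, ← mul_kronecker_mul, one_mul, mul_one]
  calc trace (M * leg2 A * N * leg1 B)
      = trace (dag1 (M * leg2 A) * dag1 (N * leg1 B)) := by
        rw [trace_dag1_mul_dag1, Matrix.mul_assoc (M * leg2 A)]
    _ = trace (dag1 M * (leg2 A * leg1 Bᵀ) * dag1 N) := by
        simp only [dag1_mul_leg2, dag1_mul_leg1, Matrix.mul_assoc]
    _ = trace (dag1 N * dag1 M * (Bᵀ ⊗ₖ A)) := by
        rw [leg2_mul_leg1, trace_mul_comm, Matrix.mul_assoc]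

theorem dag1_permM :
    dag1 (permM n K) =
      diagIncl (Fin n) K * (vecMulVec 1 1 : Matrix (Fin n) (Fin n) K) *
        (diagIncl (Fin n) K)ᵀ := by
  ext ⟨a, b⟩ ⟨c, d⟩
  simp only [dag1, permM, diagIncl_mul_mul_transpose_apply, vecMulVec_apply, Pi.one_apply, mul_one,
    eq_comm (a := d)]

theorem diagBlock_mul_dag1_permM {N : Matrix (Fin n) (Fin n) K} (hN : N *ᵥ 1 = 0) :
    diagBlock N * dag1 (permM n K) = 0 := by
  rw [dag1_permM, ← Matrix.mul_assoc, ← Matrix.mul_assoc, diagBlock_mul_diagIncl,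
    Matrix.mul_assoc _ N, mul_vecMulVec, hN, zero_vecMulVec, Matrix.mul_zero, Matrix.zero_mul]

end PartialTranspose

section TwistedShift

/-- The cyclic shift of `Rⁿ` twisted by `w`, with `n`-th power `w`: row `i` is the basis vector
`e_{i+1}`, except that the last row is `w e_0`. -/
def twistedShift (n : ℕ) {R : Type*} [Ring R] (w : R) : Matrix (Fin n) (Fin n) R :=
  of fun i => if h : (i : ℕ) + 1 < n then Pi.single ⟨i + 1, h⟩ 1 else Pi.single ⟨0, i.pos⟩ w

theorem twistedShift_mulVec {n : ℕ} {R : Type*} [Ring R] (w : R) (v : Fin n → R) (i : Fin n) :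
    (twistedShift n w *ᵥ v) i =
      if h : (i : ℕ) + 1 < n then v ⟨i + 1, h⟩ else w * v ⟨0, i.pos⟩ := by
  simp only [twistedShift, mulVec, of_apply]
  split_ifs <;> simp

theorem one_sub_twistedShift_one_mulVec_one (n : ℕ) (R : Type*) [Ring R] :
    (1 - twistedShift n (1 : R)) *ᵥ 1 = 0 := by
  ext i
  simp [sub_mulVec, twistedShift_mulVec]

variable {n : ℕ} {K : Type*} [Field K] {a w : K}

/-- The geometric sum `∑_{m < n} a ^ m T ^ m` of the twisted shift `T`, written out entrywise: only
`m = j - i` contributes to the entry `(i, j)` if `i ≤ j`, and only `m = n + j - i` if `j < i`. -/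
def twistedGeomSum (n : ℕ) {K : Type*} [Field K] (a w : K) : Matrix (Fin n) (Fin n) K :=
  of fun i j => a ^ ((j : ℤ) - i) * if j < i then a ^ n * w else 1

theorem smul_twistedShift_mul_twistedGeomSum_apply (ha : a ≠ 0) (i j : Fin n) :
    (a • (twistedShift n w * twistedGeomSum n a w)) i j =
      a ^ ((j : ℤ) - i) * if j ≤ i then a ^ n * w else 1 := by
  have shift_mul : (twistedShift n w * twistedGeomSum n a w) i j =
      if h : (i : ℕ) + 1 < n then twistedGeomSum n a w ⟨i + 1, h⟩ j
      else w * twistedGeomSum n a w ⟨0, i.pos⟩ j :=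
    twistedShift_mulVec w (fun k => twistedGeomSum n a w k j) i
  rw [Matrix.smul_apply, smul_eq_mul, shift_mul]
  by_cases h : (i : ℕ) + 1 < n
  · have lt_succ_iff : j < ⟨i + 1, h⟩ ↔ j ≤ i := Nat.lt_succ_iff
    simp only [dif_pos h, twistedGeomSum, of_apply, lt_succ_iff, Nat.cast_add, Nat.cast_one,
      sub_add_eq_sub_sub, zpow_sub_one₀ ha]
    field_simp
  · have le_last : j ≤ i := Fin.le_def.mpr (by omega)
    have not_lt_zero : ¬ j < ⟨0, i.pos⟩ := Nat.not_lt_zero j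
    have wrap : a ^ ((j : ℤ) - i) * a ^ n = a * a ^ (j : ℤ) := by
      rw [← zpow_natCast a n, ← zpow_add₀ ha, ← zpow_one_add₀ ha]
      congr 1
      omega
    simp only [dif_neg h, twistedGeomSum, of_apply, not_lt_zero, le_last, if_true, if_false,
      Nat.cast_zero, sub_zero]
    linear_combination -w * wrap

theorem one_sub_smul_twistedShift_mul_twistedGeomSum (ha : a ≠ 0) :
    (1 - a • twistedShift n w) * twistedGeomSum n a w = (1 - a ^ n * w) • 1 := by
  ext i j
  rw [Matrix.sub_mul, Matrix.one_mul, smul_mul_assoc, Matrix.sub_apply,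
    smul_twistedShift_mul_twistedGeomSum_apply ha, Matrix.smul_apply, twistedGeomSum, of_apply]
  rcases lt_trichotomy i j with hij | rfl | hij
  · simp [hij.ne, hij.not_ge, hij.not_gt]
  · simp
  · simp [hij.ne', hij, hij.le]

theorem one_sub_smul_twistedShift_mul_inv_smul_twistedGeomSum (ha : a ≠ 0)
    (h : a ^ n * w ≠ 1) :
    (1 - a • twistedShift n w) * ((1 - a ^ n * w)⁻¹ • twistedGeomSum n a w) = 1 := by
  rw [mul_smul_comm, one_sub_smul_twistedShift_mul_twistedGeomSum ha,
    inv_smul_smul₀ (sub_ne_zero.mpr h.symm)]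

theorem isUnit_det_one_sub_smul_twistedShift (ha : a ≠ 0) (h : a ^ n * w ≠ 1) :
    IsUnit (1 - a • twistedShift n w).det :=
  isUnit_det_of_right_inverse (one_sub_smul_twistedShift_mul_inv_smul_twistedGeomSum ha h)

theorem inv_one_sub_smul_twistedShift_mul (ha : a ≠ 0) (h : a ^ n * w ≠ 1) (b : K) :
    (1 - a • twistedShift n w)⁻¹ * (1 - b • twistedShift n w) =
      (b / a) • 1 + ((1 - b / a) / (1 - a ^ n * w)) • twistedGeomSum n a w := by
  have decomposition : 1 - b • twistedShift n w =
      (b / a) • (1 - a • twistedShift n w) + (1 - b / a) • 1 := by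
    rw [smul_sub, smul_smul, div_mul_cancel₀ b ha]
    module
  rw [decomposition, mul_add, mul_smul_comm, mul_smul_comm, mul_one,
    nonsing_inv_mul _ (isUnit_det_one_sub_smul_twistedShift ha h),
    inv_eq_right_inv (one_sub_smul_twistedShift_mul_inv_smul_twistedGeomSum ha h), smul_smul,
    div_eq_mul_inv (1 - b / a)]

end TwistedShift

section RMatrix

variable {n : ℕ} {K : Type*} [Field K] {q qbar : K}

/-- Matrices on `V ⊗ V` of six-vertex shape: `α` on the `e_i ⊗ e_i`, weight `1` for `E_ii ⊗ E_jj`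
and weight `β i j` for `E_ij ⊗ E_ji`, where `i ≠ j`. Both `R` and `R̃⁻` have this shape. -/
def sixVertex (α : K) (β : Fin n → Fin n → K) : Matrix (Fin n × Fin n) (Fin n × Fin n) K :=
  fun p p' =>
    (if p = p' then (if p.1 = p.2 then α else 1) else 0) +
    (if p.1 ≠ p.2 ∧ p'.1 = p.2 ∧ p'.2 = p.1 then β p.1 p.2 else 0)

theorem dag1_sixVertex (α : K) (β : Fin n → Fin n → K) :
    dag1 (sixVertex α β) = diagBlock (of fun i j => if i = j then α else β j i) := by
  ext ⟨a, b⟩ ⟨c, d⟩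
  simp only [dag1, sixVertex, diagBlock_apply, of_apply, Prod.mk.injEq]
  grind

theorem Rm_eq_sixVertex (x : K) :
    Rm n q x = sixVertex ((q - x * q⁻¹) / (1 - x))
      fun i j => (q - q⁻¹) * (if i < j then x else 1) / (1 - x) :=
  rfl

theorem Rtm_eq_sixVertex (x : K) :
    Rtm n q qbar x =
      sixVertex ((q⁻¹ - x * q * ((q ^ n * qbar)⁻¹) ^ 2) / (1 - x * ((q ^ n * qbar)⁻¹) ^ 2))
        fun i j => -(q - q⁻¹) * q ^ (2 * ((j : ℤ) - (i : ℤ))) *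
          (if i < j then x * ((q ^ n * qbar)⁻¹) ^ 2 else 1) /
          (1 - x * ((q ^ n * qbar)⁻¹) ^ 2) :=
  rfl

theorem flipM_Rtp (z : K) :
    flipM (Rtp n q qbar z) = Rm n q (z⁻¹ / qbar ^ 2) := by
  rw [div_eq_mul_inv, ← mul_inv]
  rfl

theorem dag1_Rm (hq : q ≠ 0) {w : K} (hw : w ≠ 1) :
    dag1 (Rm n q w) =
      diagBlock (q • ((1 - twistedShift n w)⁻¹ * (1 - (q ^ 2)⁻¹ • twistedShift n w))) := by
  have hw' : 1 - w ≠ 0 := sub_ne_zero.mpr hw.symm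
  have block := inv_one_sub_smul_twistedShift_mul (n := n) (w := w) one_ne_zero (by simpa)
    (q ^ 2)⁻¹
  rw [one_smul, one_pow, one_mul, div_one] at block
  rw [Rm_eq_sixVertex, dag1_sixVertex, block]
  congr 1
  ext i j
  simp only [twistedGeomSum, of_apply, Matrix.smul_apply, Matrix.add_apply, smul_eq_mul, one_apply,
    _root_.one_zpow, one_pow, one_mul]
  rcases eq_or_ne i j with rfl | hij
  · simp only [lt_irrefl, if_true, if_false]
    field_simp
    ring
  · simp only [if_neg hij]
    field_simp
    ring

theorem inv_sq_pow_mul_div (x : K) :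
    (q ^ 2)⁻¹ ^ n * (x / qbar ^ 2) = x * ((q ^ n * qbar)⁻¹) ^ 2 := by
  rw [inv_pow, ← pow_mul, mul_comm 2 n, pow_mul, inv_pow, mul_pow, mul_inv, div_eq_mul_inv]
  ring

theorem dag1_Rtm (hq : q ≠ 0) {x : K} (hx : x * ((q ^ n * qbar)⁻¹) ^ 2 ≠ 1) :
    dag1 (Rtm n q qbar x) =
      diagBlock (q⁻¹ • ((1 - (q ^ 2)⁻¹ • twistedShift n (x / qbar ^ 2))⁻¹ *
        (1 - twistedShift n (x / qbar ^ 2)))) := by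
  have hx' : 1 - x * ((q ^ n * qbar)⁻¹) ^ 2 ≠ 0 := sub_ne_zero.mpr hx.symm
  have block := inv_one_sub_smul_twistedShift_mul (n := n) (w := x / qbar ^ 2)
    (inv_ne_zero (pow_ne_zero 2 hq)) (by rwa [inv_sq_pow_mul_div]) 1
  rw [one_smul, inv_sq_pow_mul_div, div_inv_eq_mul, one_mul] at block
  have inv_sq_zpow (i j : Fin n) :
      (q ^ 2)⁻¹ ^ ((j : ℤ) - i) = q ^ (2 * ((i : ℤ) - j)) := by
    rw [_root_.inv_zpow', neg_sub, _root_.zpow_mul, zpow_ofNat]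
  rw [Rtm_eq_sixVertex, dag1_sixVertex, block]
  congr 1
  ext i j
  simp only [twistedGeomSum, of_apply, Matrix.smul_apply, Matrix.add_apply, smul_eq_mul, one_apply,
    inv_sq_zpow, inv_sq_pow_mul_div, mul_right_comm x q]
  generalize x * ((q ^ n * qbar)⁻¹) ^ 2 = u at hx'
  rcases eq_or_ne i j with rfl | hij
  · simp only [lt_irrefl, if_true, if_false, sub_self, mul_zero, zpow_zero]
    field_simp
    ring
  · simp only [if_neg hij]
    field_simp
    ring

theorem dag1_Rm_mul_dag1_Rtm (hq : q ≠ 0) {x : K} (hw : x / qbar ^ 2 ≠ 1)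
    (hu : x * ((q ^ n * qbar)⁻¹) ^ 2 ≠ 1) :
    dag1 (Rm n q (x / qbar ^ 2)) * dag1 (Rtm n q qbar x) = 1 := by
  have isUnit_right : IsUnit (1 - (q ^ 2)⁻¹ • twistedShift n (x / qbar ^ 2)).det :=
    isUnit_det_one_sub_smul_twistedShift (by simpa) (by rwa [inv_sq_pow_mul_div])
  have isUnit_left : IsUnit (1 - twistedShift n (x / qbar ^ 2)).det := by
    simpa using isUnit_det_one_sub_smul_twistedShift (n := n) (a := (1 : K)) one_ne_zero (by simpa)
  rw [dag1_Rm hq hw, dag1_Rtm hq hu, diagBlock_mul, smul_mul_smul_comm, mul_inv_cancel₀ hq,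
    one_smul, Matrix.mul_assoc, mul_nonsing_inv_cancel_left _ _ isUnit_right,
    nonsing_inv_mul _ isUnit_left, diagBlock_one]

theorem dag1_Rtm_mul_dag1_permM (hq : q ≠ 0) (hqb : qbar ≠ 0) (hqn : q ^ (2 * n) ≠ 1) :
    dag1 (Rtm n q qbar (qbar ^ 2)) * dag1 (permM n K) = 0 := by
  have hw : qbar ^ 2 / qbar ^ 2 = 1 := div_self (pow_ne_zero 2 hqb)
  have hu : qbar ^ 2 * ((q ^ n * qbar)⁻¹) ^ 2 ≠ 1 := by
    rwa [← inv_sq_pow_mul_div, hw, mul_one, inv_pow, ← pow_mul, Ne, inv_eq_one]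
  rw [dag1_Rtm hq hu, hw]
  apply diagBlock_mul_dag1_permM
  rw [smul_mulVec, ← mulVec_mulVec, one_sub_twistedShift_one_mulVec_one, mulVec_zero, smul_zero]

end RMatrix

theorem trace_identities (n : ℕ) (K : Type*) [Field K] (q qbar : K)
    (hq : q ≠ 0) (hqb : qbar ≠ 0) (hqn : q ^ (2 * n) ≠ 1)
    (A B : Matrix (Fin n) (Fin n) K) (z : K) (hz : z ≠ 0)
    (hp1 : z * qbar ^ 2 ≠ 1) (hp2 : z⁻¹ * ((q ^ n * qbar)⁻¹) ^ 2 ≠ 1) :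
    -- the defining relation R̃⁺₂₁(z)^{†₁} R̃⁻₁₂(1/z)^{†₁} = Id
    dag1 (flipM (Rtp n q qbar z)) * dag1 (Rtm n q qbar z⁻¹) = 1 ∧
    -- Tr_{V⊗V}(R̃⁺₂₁(z) A₂ R̃⁻₁₂(1/z) B₁) = Tr(A)·Tr(B)
    Matrix.trace (flipM (Rtp n q qbar z) * leg2 A * Rtm n q qbar z⁻¹ * leg1 B) =
      Matrix.trace A * Matrix.trace B ∧
    -- the residue at z = q̄⁻²: Tr((12) A₂ R̃⁻₁₂(q̄²) B₁) = 0
    Matrix.trace (permM n K * leg2 A * Rtm n q qbar (qbar ^ 2) * leg1 B) = 0 := by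
  have inverse : dag1 (flipM (Rtp n q qbar z)) * dag1 (Rtm n q qbar z⁻¹) = 1 := by
    have hw : z⁻¹ / qbar ^ 2 ≠ 1 := by
      rwa [div_eq_mul_inv, ← mul_inv, Ne, inv_eq_one]
    rw [flipM_Rtp, dag1_Rm_mul_dag1_Rtm hq hw hp2]
  refine ⟨inverse, ?_, ?_⟩
  · rw [trace_mul_leg2_mul_mul_leg1, mul_eq_one_comm.mp inverse, one_mul, trace_kronecker,
      trace_transpose, mul_comm]
  · rw [trace_mul_leg2_mul_mul_leg1, dag1_Rtm_mul_dag1_permM hq hqb hqn, zero_mul, trace_zero]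
end
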